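/- Let M, N be positive integers and let L ∈ ℝ^{M×N} have the property that for each i the entries L_{i1},…,L_{iN} together with 1 are linearly independent over ℚ. Then there exists a constant c₀ > 0 depending only on M and N such that for all Q = (Q_1,…,Q_N) ∈ [1,∞)^N one has S_L(Q) ≥ c₀ Q^N (log Q)^M, where Q := (Q_1⋯Q_N)^{1/N}. -/

import Mathlib

/-- Distance from a real number to the nearest integer. -/
noncomputable def distNearestInt (x : ℝ) : ℝ := |x - round x|

/-- The geometric mean `(Q₁ ⋯ Q_N)^(1/N)`. -/
noncomputable def geomMean (N : ℕ) (Q : Fin N → ℝ) : ℝ := (∏ j, Q j) ^ ((1 : ℝ) / (N : ℝ))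

/-- The entries of each row of `L`, together with `1`, are linearly independent over `ℚ`. -/
def rowUnitIndep (M N : ℕ) (L : Matrix (Fin M) (Fin N) ℝ) : Prop :=
  ∀ i, LinearIndependent ℚ (Fin.cons (1 : ℝ) (fun j => L i j) : Fin (N + 1) → ℝ)

/-- The sum `S_L(Q)` of reciprocals of fractional parts over the aligned box `∏ [-Q_j, Q_j]`. -/
noncomputable def SLQ (M N : ℕ) (L : Matrix (Fin M) (Fin N) ℝ) (Q : Fin N → ℝ) : ℝ :=
  ∑ q ∈ (Fintype.piFinset fun j => Finset.Icc ⌈-Q j⌉ ⌊Q j⌋).erase 0,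
    ∏ i, (distNearestInt (∑ j, L i j * (q j : ℝ)))⁻¹

/-!
Let `φ i`, for `i` in an `M`-element type, be homomorphisms from an additive group to `ℝ`, and let
`s` be a finite subset of the group. Pigeonholing `s` by the cells of a grid of `∏ i, 2 ^ k i` boxes
in the torus shows that at least `#s / ∏ i, 2 ^ k i` differences `g ∈ s - s` satisfy
`‖φ i g‖ < 2 ^ (-k i)` for all `i`, and one of them is nonzero as soon as there are fewer boxes than
points. On the other hand, `2 / ‖x‖` dominates the sum of the powers `2 ^ k` with `‖x‖ < 2 ^ (-k)`.
Multiplying over `i` and summing over `g`, each exponent vector `k` with fewer boxes than points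
contributes an amount of order `#s`, and there are at least of order `(log #s) ^ M` such vectors.
For the theorem, `s` is the set of integer points of `∏ j, [0, Q j]`, whose differences lie in
`∏ j, [-Q j, Q j]`.
-/

section DistNearestInt

lemma distNearestInt_nonneg (x : ℝ) : 0 ≤ distNearestInt x := abs_nonneg _

lemma mul_distNearestInt_sub_lt_one {n : ℕ} {x y : ℝ}
    (h : ⌊n * Int.fract x⌋ = ⌊n * Int.fract y⌋) : n * distNearestInt (x - y) < 1 := by
  have dist_le : distNearestInt (x - y) ≤ |Int.fract x - Int.fract y| := by
    have fract_sub : Int.fract x - Int.fract y = x - y - (⌊x⌋ - ⌊y⌋ : ℤ) := by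
      push_cast [Int.fract]
      ring
    exact fract_sub ▸ round_le (x - y) (⌊x⌋ - ⌊y⌋)
  calc n * distNearestInt (x - y) ≤ n * |Int.fract x - Int.fract y| := by gcongr
    _ = |n * Int.fract x - n * Int.fract y| := by rw [← mul_sub, abs_mul, Nat.abs_cast]
    _ < 1 := Int.abs_sub_lt_one_of_floor_eq_floor h

end DistNearestInt

section DyadicSums

open Finset

lemma sum_range_two_pow_filter_le {x : ℝ} (hx : 0 < x) (n : ℕ) :
    ∑ k ∈ range n with 2 ^ k * x < 1, (2 : ℝ) ^ k ≤ 2 * x⁻¹ := by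
  induction n with
  | zero => simpa using hx.le
  | succ n ih =>
    by_cases hn : 2 ^ n * x < 1
    · calc ∑ k ∈ range (n + 1) with 2 ^ k * x < 1, (2 : ℝ) ^ k
          ≤ ∑ k ∈ range (n + 1), (2 : ℝ) ^ k :=
            sum_le_sum_of_subset_of_nonneg (filter_subset _ _) fun _ _ _ => by positivity
        _ = 2 ^ (n + 1) - 1 := by rw [geom_sum_eq (by norm_num)]; norm_num
        _ ≤ 2 * 2 ^ n := by rw [pow_succ']; linarith
        _ ≤ 2 * x⁻¹ := by
            gcongr
            rw [← one_div, le_div_iff₀ hx]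
            exact hn.le
    · rwa [range_add_one, filter_insert, if_neg hn]

lemma sum_piFinset_prod_two_pow_filter_le {ι : Type*} [Fintype ι] [DecidableEq ι] {x : ι → ℝ}
    (hx : ∀ i, 0 < x i) (n : ℕ) :
    ∑ k ∈ Fintype.piFinset (fun _ : ι => range n) with ∀ i, 2 ^ k i * x i < 1, ∏ i, (2 : ℝ) ^ k i
      ≤ 2 ^ Fintype.card ι * ∏ i, (x i)⁻¹ := by
  have filter_eq : {k ∈ Fintype.piFinset (fun _ : ι => range n) | ∀ i, 2 ^ k i * x i < 1} =
      Fintype.piFinset fun i => {k ∈ range n | 2 ^ k * x i < 1} := by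
    ext k
    simp [forall_and]
  calc _ = ∏ i, ∑ k ∈ range n with 2 ^ k * x i < 1, (2 : ℝ) ^ k := by
        rw [filter_eq, prod_univ_sum]
    _ ≤ ∏ i, (2 * (x i)⁻¹) :=
        prod_le_prod (fun i _ => sum_nonneg fun k _ => by positivity)
          fun i _ => sum_range_two_pow_filter_le (hx i) n
    _ = 2 ^ Fintype.card ι * ∏ i, (x i)⁻¹ := by simp [prod_mul_distrib]

end DyadicSums

section DifferenceSets

open Finset
open scoped Pointwise

variable {ι G : Type*} [Fintype ι] [AddGroup G] [DecidableEq G] {φ : ι → G →+ ℝ}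

/-- The sum of `∏ i, ‖φ i g‖⁻¹` over the nonzero `g ∈ D`, where `‖·‖` is the distance to the nearest
integer. As `0⁻¹ = 0`, an element `g` with some `φ i g ∈ ℤ` contributes nothing. -/
noncomputable def recipDistSum (φ : ι → G →+ ℝ) (D : Finset G) : ℝ :=
  ∑ g ∈ D.erase 0, ∏ i, (distNearestInt (φ i g))⁻¹

lemma recipDistSum_mono {D E : Finset G} (h : D ⊆ E) : recipDistSum φ D ≤ recipDistSum φ E :=
  sum_le_sum_of_subset_of_nonneg (erase_subset_erase 0 h) fun _ _ _ =>
    prod_nonneg fun _ _ => inv_nonneg.2 (distNearestInt_nonneg _)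

theorem card_le_card_filter_sub_mul_prod (φ : ι → G →+ ℝ) (s : Finset G) {n : ι → ℕ}
    (hn : ∀ i, 0 < n i) :
    #s ≤ #{g ∈ s - s | ∀ i, n i * distNearestInt (φ i g) < 1} * ∏ i, n i := by
  classical
  let cell : G → ι → ℤ := fun g i => ⌊n i * Int.fract (φ i g)⌋
  let cells : Finset (ι → ℤ) := Fintype.piFinset fun i => Ico 0 (n i : ℤ)
  have cell_mem : ∀ g ∈ s, cell g ∈ cells := fun g _ => by
    refine Fintype.mem_piFinset.2 fun i => mem_Ico.2 ⟨?_, Int.floor_lt.2 ?_⟩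
    · exact Int.floor_nonneg.2 (mul_nonneg (Nat.cast_nonneg _) (Int.fract_nonneg _))
    · exact mul_lt_of_lt_one_right (mod_cast hn i) (Int.fract_lt_one _)
  have card_cells : #cells = ∏ i, n i := by simp [cells]
  rw [← card_cells]
  refine card_le_mul_card_image_of_maps_to cell_mem _ fun c _ =>
    card_le_card_sub_self.trans (card_le_card fun d hd => ?_)
  obtain ⟨g, hg, h, hh, rfl⟩ := mem_sub.1 hd
  obtain ⟨hgs, hgc⟩ := mem_filter.1 hg
  obtain ⟨hhs, hhc⟩ := mem_filter.1 hh
  refine mem_filter.2 ⟨sub_mem_sub hgs hhs, fun i => ?_⟩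
  rw [map_sub]
  exact mul_distNearestInt_sub_lt_one (congrFun (hgc.trans hhc.symm) i)

variable {s : Finset G}

lemma card_le_two_mul_card_filter_erase_mul_prod (φ : ι → G →+ ℝ) {n : ι → ℕ}
    (hn : ∀ i, 0 < n i) (hs : ∏ i, n i < #s) :
    #s ≤ 2 * (#{g ∈ (s - s).erase 0 | ∀ i, n i * distNearestInt (φ i g) < 1} * ∏ i, n i) := by
  set c := #{g ∈ (s - s).erase 0 | ∀ i, n i * distNearestInt (φ i g) < 1} with hc
  have card_le : #s ≤ (c + 1) * ∏ i, n i := by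
    refine (card_le_card_filter_sub_mul_prod φ s hn).trans (Nat.mul_le_mul_right _ ?_)
    rw [hc, filter_erase]
    exact Nat.sub_le_iff_le_add.1 pred_card_le_card_erase
  have one_le : 1 ≤ c := by
    by_contra! h
    rw [Nat.lt_one_iff.1 h] at card_le
    lia
  nlinarith

theorem pow_mul_card_le_recipDistSum (hφ : ∀ g ∈ (s - s).erase 0, ∀ i, distNearestInt (φ i g) ≠ 0)
    {n : ℕ} (hn : ∀ k : ι → ℕ, (∀ i, k i < n) → ∏ i, 2 ^ k i < #s) :
    (n : ℝ) ^ Fintype.card ι * #s ≤ 2 * 2 ^ Fintype.card ι * recipDistSum φ (s - s) := by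
  classical
  have dyadic_count (k : ι → ℕ) (hk : k ∈ Fintype.piFinset fun _ => range n) :
      (#s : ℝ) ≤ 2 * ∑ g ∈ (s - s).erase 0 with ∀ i, 2 ^ k i * distNearestInt (φ i g) < 1,
        ∏ i, (2 : ℝ) ^ k i := by
    simp only [Fintype.mem_piFinset, mem_range] at hk
    rw [sum_const, nsmul_eq_mul]
    exact_mod_cast card_le_two_mul_card_filter_erase_mul_prod φ (fun i => by positivity) (hn k hk)
  calc (n : ℝ) ^ Fintype.card ι * #s
      = ∑ _k ∈ Fintype.piFinset fun _ : ι => range n, (#s : ℝ) := by simp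
    _ ≤ ∑ k ∈ Fintype.piFinset fun _ : ι => range n, 2 * ∑ g ∈ (s - s).erase 0 with
          ∀ i, 2 ^ k i * distNearestInt (φ i g) < 1, ∏ i, (2 : ℝ) ^ k i := sum_le_sum dyadic_count
    _ = 2 * ∑ g ∈ (s - s).erase 0, ∑ k ∈ Fintype.piFinset (fun _ : ι => range n) with
          ∀ i, 2 ^ k i * distNearestInt (φ i g) < 1, ∏ i, (2 : ℝ) ^ k i := by
        rw [← mul_sum]
        congr 1
        exact sum_comm' fun k g => by simp only [mem_filter]; tauto
    _ ≤ 2 * ∑ g ∈ (s - s).erase 0,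
          2 ^ Fintype.card ι * ∏ i, (distNearestInt (φ i g))⁻¹ := by
        gcongr with g hg
        exact sum_piFinset_prod_two_pow_filter_le
          (fun i => (distNearestInt_nonneg _).lt_of_ne' (hφ g hg i)) n
    _ = 2 * 2 ^ Fintype.card ι * recipDistSum φ (s - s) := by
        rw [← mul_sum, ← mul_assoc, recipDistSum]

lemma prod_two_pow_lt_of_lt_ceil_logb [Nonempty ι] {N : ℕ} (hN : 0 < N) {k : ι → ℕ}
    (hk : ∀ i, k i < ⌈Real.logb 2 N / Fintype.card ι⌉₊) : ∏ i, 2 ^ k i < N := by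
  have sum_lt : ((∑ i, k i : ℕ) : ℝ) < Real.logb 2 N := by
    calc ((∑ i, k i : ℕ) : ℝ) = ∑ i, (k i : ℝ) := Nat.cast_sum _ _
      _ < ∑ _i : ι, Real.logb 2 N / Fintype.card ι :=
          sum_lt_sum_of_nonempty univ_nonempty fun i _ => Nat.lt_ceil.1 (hk i)
      _ = Real.logb 2 N := by simp [mul_div_cancel₀]
  rw [Real.lt_logb_iff_rpow_lt one_lt_two (mod_cast hN), Real.rpow_natCast] at sum_lt
  rw [prod_pow_eq_pow_sum]
  exact_mod_cast sum_lt

theorem card_mul_log_pow_le_recipDistSum [Nonempty ι]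
    (hφ : ∀ g ∈ (s - s).erase 0, ∀ i, distNearestInt (φ i g) ≠ 0) (hs : s.Nonempty) :
    #s * Real.log #s ^ Fintype.card ι ≤
      2 * (2 * Fintype.card ι) ^ Fintype.card ι * recipDistSum φ (s - s) := by
  set m := Fintype.card ι
  set n := ⌈Real.logb 2 #s / m⌉₊
  have m_pos : (0 : ℝ) < m := mod_cast Fintype.card_pos
  have log_nonneg : 0 ≤ Real.log #s := Real.log_natCast_nonneg _
  have log_le : Real.log #s ≤ m * n :=
    calc Real.log #s ≤ Real.log #s / Real.log 2 :=
          le_div_self log_nonneg (Real.log_pos one_lt_two) (by linarith [Real.log_two_lt_d9])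
      _ ≤ m * n := (div_le_iff₀' m_pos).1 (Nat.le_ceil _)
  calc #s * Real.log #s ^ m ≤ #s * (m * n) ^ m := by gcongr
    _ = m ^ m * (n ^ m * #s) := by ring
    _ ≤ m ^ m * (2 * 2 ^ m * recipDistSum φ (s - s)) := by
        refine mul_le_mul_of_nonneg_left ?_ (by positivity)
        exact pow_mul_card_le_recipDistSum hφ fun k hk =>
          prod_two_pow_lt_of_lt_ceil_logb hs.card_pos hk
    _ = 2 * (2 * m) ^ m * recipDistSum φ (s - s) := by ring

end DifferenceSets

section Boxes

open Finset
open scoped Pointwise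

/-- The linear form `q ↦ ∑ j, a j * q j` with real coefficients `a`, as an additive homomorphism
on the integer vectors. -/
def intLinearForm {κ : Type*} [Fintype κ] (a : κ → ℝ) : (κ → ℤ) →+ ℝ where
  toFun q := ∑ j, a j * q j
  map_zero' := by simp
  map_add' p q := by simp [mul_add, sum_add_distrib]

lemma distNearestInt_intLinearForm_ne_zero {N : ℕ} {a : Fin N → ℝ}
    (ha : LinearIndependent ℚ (Fin.cons (1 : ℝ) a : Fin (N + 1) → ℝ)) {q : Fin N → ℤ}
    (hq : q ≠ 0) : distNearestInt (intLinearForm a q) ≠ 0 := by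
  refine fun h => hq (funext fun j => ?_)
  set r := round (intLinearForm a q)
  have relation : ∑ j, (Fin.cons (-(r : ℚ)) (fun j => (q j : ℚ)) : Fin (N + 1) → ℚ) j •
      (Fin.cons (1 : ℝ) a : Fin (N + 1) → ℝ) j = 0 := by
    simpa [Fin.sum_univ_succ, Rat.smul_def, mul_comm, intLinearForm, ← sub_eq_neg_add, r]
      using abs_eq_zero.1 h
  simpa using Fintype.linearIndependent_iff.1 ha _ relation j.succ

variable {κ : Type*} [Fintype κ] [DecidableEq κ] {Q : κ → ℝ}

lemma prod_le_card_piFinset_Icc_zero_floor (hQ : ∀ j, 0 ≤ Q j) :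
    ∏ j, Q j ≤ #(Fintype.piFinset fun j => Icc 0 ⌊Q j⌋) := by
  rw [Fintype.card_piFinset, Nat.cast_prod]
  refine prod_le_prod (fun j _ => hQ j) fun j _ => ?_
  rw [Int.card_Icc, sub_zero]
  calc Q j ≤ (⌊Q j⌋ + 1 : ℤ) := by exact_mod_cast (Int.lt_floor_add_one (Q j)).le
    _ ≤ ((⌊Q j⌋ + 1).toNat : ℤ) := Int.cast_le.2 (Int.self_le_toNat _)

variable (Q) in
lemma piFinset_Icc_zero_floor_sub_self_subset :
    (Fintype.piFinset fun j => Icc 0 ⌊Q j⌋) - (Fintype.piFinset fun j => Icc 0 ⌊Q j⌋) ⊆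
      Fintype.piFinset fun j => Icc ⌈-Q j⌉ ⌊Q j⌋ := by
  intro d hd
  obtain ⟨p, hp, q, hq, rfl⟩ := mem_sub.1 hd
  simp only [Fintype.mem_piFinset, mem_Icc, Int.ceil_neg, Pi.sub_apply] at hp hq ⊢
  exact fun j => by have := hp j; have := hq j; lia

theorem prod_mul_log_pow_le_recipDistSum {ι : Type*} [Fintype ι] [Nonempty ι] (hQ : ∀ j, 1 ≤ Q j)
    {φ : ι → (κ → ℤ) →+ ℝ}
    (hφ : ∀ q ∈ (Fintype.piFinset fun j => Icc ⌈-Q j⌉ ⌊Q j⌋).erase 0, ∀ i,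
      distNearestInt (φ i q) ≠ 0) :
    (∏ j, Q j) * Real.log (∏ j, Q j) ^ Fintype.card ι ≤
      2 * (2 * Fintype.card ι) ^ Fintype.card ι *
        recipDistSum φ (Fintype.piFinset fun j => Icc ⌈-Q j⌉ ⌊Q j⌋) := by
  set s : Finset (κ → ℤ) := Fintype.piFinset fun j => Icc 0 ⌊Q j⌋
  have sub_subset := piFinset_Icc_zero_floor_sub_self_subset Q
  have prod_le_card : ∏ j, Q j ≤ #s :=
    prod_le_card_piFinset_Icc_zero_floor fun j => zero_le_one.trans (hQ j)
  have one_le : 1 ≤ ∏ j, Q j := one_le_prod fun j _ => hQ j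
  have log_nonneg := Real.log_nonneg one_le
  have s_nonempty : s.Nonempty := by
    rw [← card_pos, ← Nat.cast_pos (α := ℝ)]
    linarith
  calc (∏ j, Q j) * Real.log (∏ j, Q j) ^ Fintype.card ι
      ≤ #s * Real.log #s ^ Fintype.card ι := by gcongr
    _ ≤ 2 * (2 * Fintype.card ι) ^ Fintype.card ι * recipDistSum φ (s - s) :=
        card_mul_log_pow_le_recipDistSum
          (fun q hq => hφ q (erase_subset_erase 0 sub_subset hq)) s_nonempty
    _ ≤ _ := by
        gcongr
        exact recipDistSum_mono sub_subset

end Boxes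

section GeomMean

variable {N : ℕ} {Q : Fin N → ℝ}

lemma geomMean_pow (hN : N ≠ 0) (hQ : ∀ j, 0 ≤ Q j) : geomMean N Q ^ N = ∏ j, Q j := by
  rw [geomMean, one_div, Real.rpow_inv_natCast_pow (Finset.prod_nonneg fun j _ => hQ j) hN]

lemma one_le_geomMean (hQ : ∀ j, 1 ≤ Q j) : 1 ≤ geomMean N Q :=
  Real.one_le_rpow (Finset.one_le_prod fun j _ => hQ j) (by positivity)

end GeomMean

theorem stmt2_general {M N : ℕ} (hM : 0 < M) (hN : 0 < N) (L : Matrix (Fin M) (Fin N) ℝ)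
    {Q : Fin N → ℝ} (hQ : ∀ j, 1 ≤ Q j)
    (hL : ∀ q ∈ (Fintype.piFinset fun j => Finset.Icc ⌈-Q j⌉ ⌊Q j⌋).erase 0, ∀ i,
      distNearestInt (∑ j, L i j * (q j : ℝ)) ≠ 0) :
    (2 * (2 * M : ℝ) ^ M)⁻¹ * (geomMean N Q ^ N * Real.log (geomMean N Q) ^ M) ≤ SLQ M N L Q := by
  have : Nonempty (Fin M) := ⟨⟨0, hM⟩⟩
  have one_le_mean := one_le_geomMean hQ
  have pow_eq_prod := geomMean_pow hN.ne' fun j => zero_le_one.trans (hQ j)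
  have log_nonneg := Real.log_nonneg one_le_mean
  have log_le : Real.log (geomMean N Q) ≤ Real.log (geomMean N Q ^ N) :=
    Real.log_le_log (by positivity) (le_self_pow₀ one_le_mean hN.ne')
  rw [inv_mul_le_iff₀ (by positivity)]
  calc geomMean N Q ^ N * Real.log (geomMean N Q) ^ M
      ≤ geomMean N Q ^ N * Real.log (geomMean N Q ^ N) ^ M := by gcongr
    _ ≤ 2 * (2 * M) ^ M * SLQ M N L Q := by
        rw [pow_eq_prod]
        simpa only [Fintype.card_fin] using!
          prod_mul_log_pow_le_recipDistSum (φ := fun i => intLinearForm (L i)) hQ hL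

theorem stmt2 (M N : ℕ) (hM : 0 < M) (hN : 0 < N) :
    ∃ c₀ : ℝ, 0 < c₀ ∧
      ∀ L : Matrix (Fin M) (Fin N) ℝ, rowUnitIndep M N L →
      ∀ Q : Fin N → ℝ, (∀ j, 1 ≤ Q j) →
        c₀ * (geomMean N Q ^ N * Real.log (geomMean N Q) ^ M) ≤ SLQ M N L Q :=
  ⟨(2 * (2 * M : ℝ) ^ M)⁻¹, by positivity, fun L hL _ hQ => stmt2_general hM hN L hQ fun _ hq i =>
    distNearestInt_intLinearForm_ne_zero (hL i) (Finset.ne_of_mem_erase hq)⟩
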